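/- arXiv:1311.3454 — 2 statements merged into one kernel-verified Lean document; each statement's English description precedes it below -/
import Mathlib

section
/- Let X and Y be real Banach spaces, let r > 0, and let H : X → Y be a map which is Fréchet differentiable at every point of the closed ball B_r(0) ⊆ X, with derivative H'(U) ∈ L(X,Y), such that the derivative is Lipschitz on B_r(0): ‖H'(U₁) − H'(U₂)‖ ≤ L‖U₁ − U₂‖ for all U₁, U₂ ∈ B_r(0). Suppose there exists a continuous linear operator A : Y → X that is a two-sided inverse of H'(0), and set M = ‖A‖ and Λ = ‖A(H(0))‖. If λ := MΛL < 1/4 and Λt₀ ≤ r, where t₀ is the least root of λt² − t + 1 = 0 (with t₀ = 1 when λ = 0), then the equation H(U) = 0 has exactly one solution U* in the closed ball of radius Λt₀ centered at 0. -/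
open Metric

/-!
A zero of `H` is a zero of `A ∘ H`, because `A` is injective. By the mean value inequality `A ∘ H`
differs from the identity on the ball of radius `ρ = Λ * t` by a map with Lipschitz constant
`M * L * ρ = lam * t`. The modified Newton map `U ↦ U - A (H U)` is therefore a contraction when
`lam * t < 1`, and it preserves the ball when `Λ ≤ (1 - lam * t) * ρ`, that is, when
`lam * t ^ 2 - t + 1 ≤ 0`, which in turn forces `lam * t < 1`. Every `t` between the
two roots qualifies: the least one locates the zero best, the greatest gives the widest uniqueness.
-/

open scoped NNReal

section ApproximatesId

variable {𝕜 E : Type*} [NontriviallyNormedField 𝕜] [NormedAddCommGroup E] [NormedSpace 𝕜 E]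
  {f : E → E} {s : Set E} {c : ℝ≥0}

theorem injOn_of_approximatesLinearOn_id
    (hf : ApproximatesLinearOn f (ContinuousLinearMap.id 𝕜 E) s c) (hc : c < 1) :
    Set.InjOn f s := by
  intro x hx y hy hxy
  by_contra hne
  have hpos : 0 < ‖x - y‖ := norm_sub_pos_iff.2 hne
  have hle : ‖x - y‖ ≤ c * ‖x - y‖ := by simpa [hxy, norm_sub_rev y x] using hf x hx y hy
  exact hle.not_gt (mul_lt_of_lt_one_left hpos hc)

theorem surjOn_closedBall_of_approximatesLinearOn_id [CompleteSpace E] {x : E} {ρ : ℝ}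
    (hf : ApproximatesLinearOn f (ContinuousLinearMap.id 𝕜 E) (closedBall x ρ) c) (hρ : 0 ≤ ρ) :
    Set.SurjOn f (closedBall x ρ) (closedBall (f x) ((1 - c) * ρ)) := by
  -- `ContinuousLinearEquiv.toNonlinearRightInverse` would give the constant `0` if `E` is trivial.
  let idInverse : (ContinuousLinearMap.id 𝕜 E).NonlinearRightInverse :=
    { toFun := id, nnnorm := 1, bound' := by simp, right_inv' := fun _ => rfl }
  simpa [idInverse] using
    hf.surjOn_closedBall_of_nonlinearRightInverse idInverse hρ subset_rfl

theorem existsUnique_zero_of_approximatesLinearOn_id [CompleteSpace E] {x : E} {ρ : ℝ}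
    (hf : ApproximatesLinearOn f (ContinuousLinearMap.id 𝕜 E) (closedBall x ρ) c) (hc : c < 1)
    (hx : ‖f x‖ ≤ (1 - c) * ρ) : ∃! u, u ∈ closedBall x ρ ∧ f u = 0 := by
  have hρ : 0 ≤ ρ :=
    nonneg_of_mul_nonneg_right ((norm_nonneg _).trans hx) (sub_pos.2 (NNReal.coe_lt_one.2 hc))
  obtain ⟨u, hu, hfu⟩ : (0 : E) ∈ f '' closedBall x ρ :=
    surjOn_closedBall_of_approximatesLinearOn_id hf hρ (by simpa using hx)
  exact ⟨u, ⟨hu, hfu⟩, fun v ⟨hv, hfv⟩ =>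
    injOn_of_approximatesLinearOn_id hf hc hv hu (hfv.trans hfu.symm)⟩

end ApproximatesId

theorem norm_comp_sub_id_le {𝕜 E F : Type*} [NontriviallyNormedField 𝕜]
    [SeminormedAddCommGroup E] [NormedSpace 𝕜 E] [SeminormedAddCommGroup F] [NormedSpace 𝕜 F]
    {A : F →L[𝕜] E} {T T₀ : E →L[𝕜] F} {δ : ℝ} (hA : ∀ x, A (T₀ x) = x) (hT : ‖T - T₀‖ ≤ δ) :
    ‖A.comp T - ContinuousLinearMap.id 𝕜 E‖ ≤ ‖A‖ * δ := by
  have hcomp : A.comp T - ContinuousLinearMap.id 𝕜 E = A.comp (T - T₀) := by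
    ext x
    simp [hA]
  calc ‖A.comp T - ContinuousLinearMap.id 𝕜 E‖ = ‖A.comp (T - T₀)‖ := by rw [hcomp]
    _ ≤ ‖A‖ * ‖T - T₀‖ := A.opNorm_comp_le _
    _ ≤ ‖A‖ * δ := by gcongr

section Newton

variable {𝕜 X Y : Type*} [RCLike 𝕜] [NormedAddCommGroup X] [NormedSpace ℝ X] [NormedSpace 𝕜 X]
  [CompleteSpace X] [NormedAddCommGroup Y] [NormedSpace 𝕜 Y]
  {H : X → Y} {H' : X → X →L[𝕜] Y} {A : Y →L[𝕜] X} {x₀ : X}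

theorem existsUnique_zero_of_norm_comp_sub_id_le {ρ : ℝ} {c : ℝ≥0}
    (hdiff : ∀ U ∈ closedBall x₀ ρ, HasFDerivWithinAt H (H' U) (closedBall x₀ ρ) U)
    (hA : Function.Injective A)
    (hbound : ∀ U ∈ closedBall x₀ ρ, ‖A.comp (H' U) - ContinuousLinearMap.id 𝕜 X‖ ≤ c)
    (hc : c < 1) (hx₀ : ‖A (H x₀)‖ ≤ (1 - c) * ρ) :
    ∃! U, U ∈ closedBall x₀ ρ ∧ H U = 0 := by
  have happrox : ApproximatesLinearOn (A ∘ H) (ContinuousLinearMap.id 𝕜 X) (closedBall x₀ ρ) c :=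
    fun U hU V hV => (convex_closedBall x₀ ρ).norm_image_sub_le_of_norm_hasFDerivWithin_le'
      (fun W hW => A.hasFDerivAt.comp_hasFDerivWithinAt W (hdiff W hW)) hbound hV hU
  simpa only [Function.comp_apply, map_eq_zero_iff A hA] using
    existsUnique_zero_of_approximatesLinearOn_id happrox hc hx₀

theorem newton_unique_zero_general {L t : ℝ} (ht : 0 ≤ t)
    (hroot : ‖A‖ * ‖A (H x₀)‖ * L * t ^ 2 - t + 1 ≤ 0)
    (hdiff : ∀ U ∈ closedBall x₀ (‖A (H x₀)‖ * t),
      HasFDerivWithinAt H (H' U) (closedBall x₀ (‖A (H x₀)‖ * t)) U)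
    (hLip : ∀ U ∈ closedBall x₀ (‖A (H x₀)‖ * t), ‖H' U - H' x₀‖ ≤ L * ‖U - x₀‖)
    (hA : Function.Injective A) (hA_right : ∀ x, A (H' x₀ x) = x) :
    ∃! U, U ∈ closedBall x₀ (‖A (H x₀)‖ * t) ∧ H U = 0 := by
  set Λ := ‖A (H x₀)‖
  set ρ := Λ * t with hρ
  -- The ball contains a point at distance exactly `ρ` from its centre, so `L < 0` forces `ρ = 0`.
  have hLρ : 0 ≤ L * ρ := by
    have hnorm : ‖x₀ + t • A (H x₀) - x₀‖ = ρ := by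
      rw [add_sub_cancel_left, norm_smul, Real.norm_of_nonneg ht, mul_comm]
    simpa only [hnorm] using
      (norm_nonneg _).trans (hLip _ (mem_closedBall_iff_norm.2 hnorm.le))
  have hderiv : ∀ U ∈ closedBall x₀ ρ, ‖H' U - H' x₀‖ ≤ L * ρ := by
    intro U hU
    refine (hLip U hU).trans ?_
    rcases le_total 0 L with hL | hL
    · exact mul_le_mul_of_nonneg_left (mem_closedBall_iff_norm.1 hU) hL
    · exact (mul_nonpos_of_nonpos_of_nonneg hL (norm_nonneg _)).trans hLρ
  have hconst : ‖A‖ * (L * ρ) < 1 := by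
    rw [hρ]
    by_contra! hge
    nlinarith [mul_le_mul_of_nonneg_right hge ht]
  have hstep : Λ ≤ (1 - ‖A‖ * (L * ρ)) * ρ :=
    calc Λ ≤ Λ * (t - ‖A‖ * Λ * L * t ^ 2) :=
          le_mul_of_one_le_right (norm_nonneg _) (by linarith)
      _ = (1 - ‖A‖ * (L * ρ)) * ρ := by ring
  exact existsUnique_zero_of_norm_comp_sub_id_le (c := ⟨‖A‖ * (L * ρ), by positivity⟩) hdiff hA
    (fun U hU => norm_comp_sub_id_le hA_right (hderiv U hU)) hconst hstep

end Newton

section LeastRoot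

/-- The least positive root `t₀` of `lam * t ^ 2 - t + 1`, for `lam ≤ 1 / 4`. At `lam = 0` the
quadratic formula reads `0 / 0`, and its limit `1` is used instead. -/
noncomputable def leastRoot (lam : ℝ) : ℝ :=
  if lam = 0 then 1 else (1 - √(1 - 4 * lam)) / (2 * lam)

variable {lam : ℝ}

theorem leastRoot_eq_two_div (h : lam ≤ 1 / 4) : leastRoot lam = 2 / (1 + √(1 - 4 * lam)) := by
  have hsq : √(1 - 4 * lam) ^ 2 = 1 - 4 * lam := Real.sq_sqrt (by linarith)
  rw [leastRoot]
  split_ifs with h0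
  · norm_num [h0]
  · rw [div_eq_div_iff (by positivity) (by positivity)]
    linear_combination -hsq

theorem leastRoot_pos (h : lam ≤ 1 / 4) : 0 < leastRoot lam := by
  rw [leastRoot_eq_two_div h]
  positivity

theorem quadratic_leastRoot_eq_zero (h : lam ≤ 1 / 4) :
    lam * leastRoot lam ^ 2 - leastRoot lam + 1 = 0 := by
  have hsq : √(1 - 4 * lam) ^ 2 = 1 - 4 * lam := Real.sq_sqrt (by linarith)
  rw [leastRoot_eq_two_div h]
  set q := √(1 - 4 * lam)
  have hq : 0 ≤ q := Real.sqrt_nonneg _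
  field_simp
  linear_combination hsq

end LeastRoot

/-- Modified Newton's method (Kantorovich-type theorem): uniqueness of a zero of `H`
in the closed ball of radius `Λ * t₀`. -/
theorem newton_unique_zero
    {X Y : Type*} [NormedAddCommGroup X] [NormedSpace ℝ X] [CompleteSpace X]
    [NormedAddCommGroup Y] [NormedSpace ℝ Y] [CompleteSpace Y]
    (r L : ℝ) (hr : 0 < r)
    (H : X → Y) (H' : X → X →L[ℝ] Y)
    (hdiff : ∀ U ∈ closedBall (0 : X) r, HasFDerivAt H (H' U) U)
    (hLip : ∀ U₁ ∈ closedBall (0 : X) r, ∀ U₂ ∈ closedBall (0 : X) r,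
      ‖H' U₁ - H' U₂‖ ≤ L * ‖U₁ - U₂‖)
    (A : Y →L[ℝ] X)
    (hA_left : ∀ y : Y, H' 0 (A y) = y)
    (hA_right : ∀ x : X, A (H' 0 x) = x)
    (M Λ lam t₀ : ℝ)
    (hM : M = ‖A‖) (hΛ : Λ = ‖A (H 0)‖)
    (hlam : lam = M * Λ * L)
    (hlam_lt : lam < 1 / 4)
    (ht₀ : t₀ = if lam = 0 then 1 else (1 - Real.sqrt (1 - 4 * lam)) / (2 * lam))
    (hball : Λ * t₀ ≤ r) :
    ∃! U : X, U ∈ closedBall (0 : X) (Λ * t₀) ∧ H U = 0 := by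
  subst hM hΛ hlam
  obtain rfl : t₀ = leastRoot _ := ht₀
  have hsub := closedBall_subset_closedBall (x := (0 : X)) hball
  exact newton_unique_zero_general (leastRoot_pos hlam_lt.le).le
    (quadratic_leastRoot_eq_zero hlam_lt.le).le
    (fun U hU => (hdiff U (hsub hU)).hasFDerivWithinAt)
    (fun U hU => hLip U (hsub hU) 0 (mem_closedBall_self hr.le))
    (Function.LeftInverse.injective hA_left) hA_right
end

section
/- Let R > 0 and T > 0. Let B : [−R,R] × [0,T] → ℝ be continuously differentiable, such that for each t the function x ↦ B(x,t)∂_x B(x,t) is differentiable in x on (−R,R) with ∂_t B(x,t) = ∂_x( B ∂_x B )(x,t) for all (x,t) ∈ (−R,R) × (0,T), and such that B(−R,t) = 0 for all t ∈ [0,T]. Let η : [0,T] → (−R,R) be differentiable with η'(t) = −∂_x B(η(t), t) for all t ∈ (0,T). Then the mass M(t) = ∫_{−R}^{η(t)} B(x,t) dx is constant on [0,T]. -/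
open Set intervalIntegral

/-!
For a conservation law `∂_t u = ∂_x F`, differentiating `∫_a^{η(t)} u(x,t) dx` with the Leibniz rule
and evaluating `∫_a^{η(t)} ∂_x F dx` by the fundamental theorem of calculus gives
`η'(t) u(η(t),t) + F(η(t),t) - F(a,t)`. For the porous medium equation `F = B ∂_x B`, so the flux
through `x = -R` vanishes with `B`, and the flux through `x = η(t)` is cancelled by
`η' = -∂_x B(η, ·)`.
-/

open Function MeasureTheory Topology

section ParametricIntegral

variable {E : Type*} [NormedAddCommGroup E] [NormedSpace ℝ E] {a b : ℝ}

theorem continuousOn_parametric_primitive {X : Type*} [TopologicalSpace X]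
    [FirstCountableTopology X] {f : ℝ → X → E} {s : Set X} (hab : a ≤ b)
    (hf : ContinuousOn (uncurry f) (Icc a b ×ˢ s)) :
    ContinuousOn (fun p : ℝ × X => ∫ x in a..p.1, f x p.2) (Icc a b ×ˢ s) := by
  -- Clamping `x` to `[a, b]` leaves the integrals unchanged and makes the integrand
  -- continuous on all of `s × ℝ`.
  let g : s → ℝ → E := fun t x => f (projIcc a b hab x) t
  have hg : Continuous (uncurry g) :=
    hf.comp_continuous (f := fun p : s × ℝ => ((projIcc a b hab p.2 : ℝ), (p.1 : X)))
      (by fun_prop) fun p => ⟨Subtype.coe_prop _, p.1.2⟩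
  have hswap : Continuous fun p : ↥(Icc a b ×ˢ s) => ((⟨p.1.2, p.2.2⟩ : s), p.1.1) := by fun_prop
  have hprim :=
    (continuous_parametric_primitive_of_continuous (μ := volume) (a₀ := a) hg).comp hswap
  rw [continuousOn_iff_continuous_domRestrict]
  refine hprim.congr fun p => integral_congr fun x hx => ?_
  rw [uIcc_of_le p.2.1.1] at hx
  simp only [projIcc_of_mem hab ⟨hx.1, hx.2.trans p.2.1.2⟩]

theorem hasDerivAt_integral_of_continuousOn {f f' : ℝ → ℝ → E} {s : Set ℝ} {t : ℝ}
    (hab : a ≤ b) (hs : s ∈ 𝓝 t) (hf : ∀ τ ∈ s, ContinuousOn (f · τ) (Icc a b))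
    (hf' : ContinuousOn (uncurry f') (Icc a b ×ˢ s))
    (hderiv : ∀ x ∈ Ioc a b, ∀ τ ∈ s, HasDerivAt (f x) (f' x τ) τ) :
    HasDerivAt (fun τ => ∫ x in a..b, f x τ) (∫ x in a..b, f' x t) t := by
  obtain ⟨K, hKt, hKs, hK⟩ := local_compact_nhds hs
  obtain ⟨M, hM⟩ := (isCompact_Icc.prod hK).exists_bound_of_continuousOn
    (hf'.mono (prod_mono_right hKs))
  have hmeas {g : ℝ → E} (hg : ContinuousOn g (Icc a b)) :
      AEStronglyMeasurable g (volume.restrict (uIoc a b)) :=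
    (uIoc_of_le hab ▸ hg.mono Ioc_subset_Icc_self).aestronglyMeasurable measurableSet_uIoc
  have ht : t ∈ s := mem_of_mem_nhds hs
  have hbound : ∀ x ∈ uIoc a b, ∀ τ ∈ K, ‖f' x τ‖ ≤ M := fun x hx τ hτ =>
    hM (x, τ) ⟨Ioc_subset_Icc_self (uIoc_of_le hab ▸ hx), hτ⟩
  have hdiff : ∀ x ∈ uIoc a b, ∀ τ ∈ K, HasDerivAt (f x) (f' x τ) τ := fun x hx τ hτ =>
    hderiv x (uIoc_of_le hab ▸ hx) τ (hKs hτ)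
  exact (hasDerivAt_integral_of_dominated_loc_of_deriv_le (F' := fun τ x => f' x τ) hKt
    (Filter.mem_of_superset hs fun τ hτ => hmeas (hf τ hτ))
    ((hf t ht).intervalIntegrable_of_Icc hab) (hmeas (hf'.uncurry_right t ht))
    (.of_forall hbound) intervalIntegrable_const (.of_forall hdiff)).2

variable [CompleteSpace E] {f f' : ℝ → ℝ → E} {s : Set ℝ} {t : ℝ}

theorem hasStrictFDerivAt_parametric_primitive {y : ℝ} (hy : y ∈ Ioo a b) (hs : IsOpen s)
    (ht : t ∈ s) (hf : ContinuousOn (uncurry f) (Icc a b ×ˢ s))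
    (hf' : ContinuousOn (uncurry f') (Icc a b ×ˢ s))
    (hderiv : ∀ x ∈ Ioo a b, ∀ τ ∈ s, HasDerivAt (f x) (f' x τ) τ) :
    HasStrictFDerivAt (fun p : ℝ × ℝ => ∫ x in a..p.1, f x p.2)
      ((ContinuousLinearMap.toSpanSingleton ℝ (f y t)).coprod
        (ContinuousLinearMap.toSpanSingleton ℝ (∫ x in a..y, f' x t))) (y, t) := by
  have hopen : Ioo a b ×ˢ s ∈ 𝓝 (y, t) := (isOpen_Ioo.prod hs).mem_nhds ⟨hy, ht⟩
  have hnhds : Icc a b ×ˢ s ∈ 𝓝 (y, t) :=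
    Filter.mem_of_superset hopen (prod_mono_left Ioo_subset_Icc_self)
  have hspan : Continuous fun v : E => ContinuousLinearMap.toSpanSingleton ℝ v :=
    (ContinuousLinearMap.toSpanSingletonCLE (𝕜 := ℝ) (E := E)).continuous
  refine hasStrictFDerivAt_uncurry_coprod (u := (y, t)) (f := fun y t => ∫ x in a..y, f x t)
    (f₁ := fun y t => ContinuousLinearMap.toSpanSingleton ℝ (f y t))
    (f₂ := fun y t => ContinuousLinearMap.toSpanSingleton ℝ (∫ x in a..y, f' x t))
    ?endpoint ?parameter (hspan.continuousAt.comp (hf.continuousAt hnhds))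
    (hspan.continuousAt.comp
      ((continuousOn_parametric_primitive (hy.1.trans hy.2).le hf').continuousAt hnhds))
  case endpoint =>
    filter_upwards [hopen] with ⟨z, τ⟩ ⟨hz, hτ⟩
    have hslice : ContinuousOn (f · τ) (Icc a b) := hf.uncurry_right τ hτ
    have hslice' := hslice.mono Ioo_subset_Icc_self
    exact integral_hasDerivAt_right
      ((hslice.mono (Icc_subset_Icc_right hz.2.le)).intervalIntegrable_of_Icc hz.1.le)
      (hslice'.stronglyMeasurableAtFilter isOpen_Ioo z hz)
      (hslice'.continuousAt (isOpen_Ioo.mem_nhds hz))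
  case parameter =>
    filter_upwards [hopen] with ⟨z, τ⟩ ⟨hz, hτ⟩
    have hsub : Icc a z ⊆ Icc a b := Icc_subset_Icc_right hz.2.le
    exact hasDerivAt_integral_of_continuousOn hz.1.le (hs.mem_nhds hτ)
      (fun σ hσ => (hf.uncurry_right σ hσ).mono hsub) (hf'.mono (prod_mono_left hsub))
      fun x hx => hderiv x ⟨hx.1, hx.2.trans_lt hz.2⟩

theorem hasDerivAt_integral_moving_endpoint {η : ℝ → ℝ} {η' : ℝ} (hηt : η t ∈ Ioo a b)
    (hs : IsOpen s) (ht : t ∈ s) (hf : ContinuousOn (uncurry f) (Icc a b ×ˢ s))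
    (hf' : ContinuousOn (uncurry f') (Icc a b ×ˢ s))
    (hderiv : ∀ x ∈ Ioo a b, ∀ τ ∈ s, HasDerivAt (f x) (f' x τ) τ)
    (hη : HasDerivAt η η' t) :
    HasDerivAt (fun τ => ∫ x in a..η τ, f x τ)
      (η' • f (η t) t + ∫ x in a..η t, f' x t) t := by
  have hprim := hasStrictFDerivAt_parametric_primitive hηt hs ht hf hf' hderiv
  simpa using! hprim.hasFDerivAt.comp_hasDerivAt (f := fun τ => (η τ, τ)) t
    (hη.prodMk (hasDerivAt_id t))

theorem hasDerivAt_integral_of_conservation_law {F : ℝ → ℝ → E} {η : ℝ → ℝ} {η' : ℝ}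
    (hηt : η t ∈ Ioo a b) (hs : IsOpen s) (ht : t ∈ s)
    (hf : ContinuousOn (uncurry f) (Icc a b ×ˢ s))
    (hf' : ContinuousOn (uncurry f') (Icc a b ×ˢ s))
    (hderiv : ∀ x ∈ Ioo a b, ∀ τ ∈ s, HasDerivAt (f x) (f' x τ) τ)
    (hF : ContinuousOn (F · t) (Icc a b))
    (hlaw : ∀ x ∈ Ioo a b, HasDerivAt (F · t) (f' x t) x) (hη : HasDerivAt η η' t) :
    HasDerivAt (fun τ => ∫ x in a..η τ, f x τ)
      (η' • f (η t) t + (F (η t) t - F a t)) t := by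
  have hsub : Icc a (η t) ⊆ Icc a b := Icc_subset_Icc_right hηt.2.le
  have hflux : ∫ x in a..η t, f' x t = F (η t) t - F a t :=
    integral_eq_sub_of_hasDerivAt_of_le hηt.1.le (hF.mono hsub)
      (fun x hx => hlaw x ⟨hx.1, hx.2.trans hηt.2⟩)
      (((hf'.uncurry_right t ht).mono hsub).intervalIntegrable_of_Icc hηt.1.le)
  exact hflux ▸ hasDerivAt_integral_moving_endpoint hηt hs ht hf hf' hderiv hη

theorem mass_conservation_general {u ut F : ℝ → ℝ → E} {η η' : ℝ → ℝ} {t₀ t₁ : ℝ}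
    (hut : ∀ x ∈ Ioo a b, ∀ t ∈ Ioo t₀ t₁, HasDerivAt (u x) (ut x t) t)
    (hucont : ContinuousOn (uncurry u) (Icc a b ×ˢ Icc t₀ t₁))
    (hutcont : ContinuousOn (uncurry ut) (Icc a b ×ˢ Ioo t₀ t₁))
    (hFcont : ∀ t ∈ Ioo t₀ t₁, ContinuousOn (F · t) (Icc a b))
    (hlaw : ∀ x ∈ Ioo a b, ∀ t ∈ Ioo t₀ t₁, HasDerivAt (F · t) (ut x t) x)
    (hηmem : ∀ t ∈ Icc t₀ t₁, η t ∈ Ioo a b) (hηcont : ContinuousOn η (Icc t₀ t₁))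
    (hη' : ∀ t ∈ Ioo t₀ t₁, HasDerivAt η (η' t) t)
    (hflux : ∀ t ∈ Ioo t₀ t₁, η' t • u (η t) t + F (η t) t = F a t) :
    ∀ t ∈ Icc t₀ t₁, ∫ x in a..η t, u x t = ∫ x in a..η t₀, u x t₀ := by
  intro t ht
  have hab : a ≤ b := ((hηmem t ht).1.trans (hηmem t ht).2).le
  have hcont : ContinuousOn (fun τ => ∫ x in a..η τ, u x τ) (Icc t₀ t₁) :=
    (continuousOn_parametric_primitive hab hucont).comp (hηcont.prodMk continuousOn_id)
      fun τ hτ => ⟨Ioo_subset_Icc_self (hηmem τ hτ), hτ⟩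
  have hderiv : ∀ τ ∈ Ioo t₀ t₁, HasDerivAt (fun τ => ∫ x in a..η τ, u x τ) 0 τ := by
    intro τ hτ
    have hbalance := hasDerivAt_integral_of_conservation_law
      (hηmem τ (Ioo_subset_Icc_self hτ)) isOpen_Ioo hτ
      (hucont.mono (prod_mono_right Ioo_subset_Icc_self)) hutcont hut (hFcont τ hτ)
      (fun x hx => hlaw x hx τ hτ) (hη' τ hτ)
    rwa [← add_sub_assoc, hflux τ hτ, sub_self] at hbalance
  have hint := integral_eq_sub_of_hasDerivAt_of_le ht.1 (hcont.mono (Icc_subset_Icc_right ht.2))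
    (fun τ hτ => hderiv τ ⟨hτ.1, hτ.2.trans_le ht.2⟩) intervalIntegrable_const
  rw [intervalIntegral.integral_zero] at hint
  exact sub_eq_zero.mp hint.symm

end ParametricIntegral

/-- Mass conservation: if `B` is a classical solution of the porous medium equation
`∂_t B = ∂_x (B ∂_x B)` on `(-R,R) × (0,T)` vanishing at `x = -R`, and `η` solves the ODE
`η'(t) = -∂_x B(η(t), t)`, then the mass `M(t) = ∫_{-R}^{η(t)} B(x,t) dx` is constant
on `[0,T]`. -/
theorem mass_conservation
    (R T : ℝ) (hR : 0 < R) (hT : 0 < T)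
    (B Bx Bt : ℝ → ℝ → ℝ)
    (hBx : ∀ x ∈ Icc (-R) R, ∀ t ∈ Icc (0:ℝ) T,
      HasDerivAt (fun x' => B x' t) (Bx x t) x)
    (hBt : ∀ x ∈ Icc (-R) R, ∀ t ∈ Icc (0:ℝ) T,
      HasDerivAt (fun t' => B x t') (Bt x t) t)
    (hBcont : ContinuousOn (fun p : ℝ × ℝ => B p.1 p.2) (Icc (-R) R ×ˢ Icc (0:ℝ) T))
    (hBxcont : ContinuousOn (fun p : ℝ × ℝ => Bx p.1 p.2) (Icc (-R) R ×ˢ Icc (0:ℝ) T))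
    (hBtcont : ContinuousOn (fun p : ℝ × ℝ => Bt p.1 p.2) (Icc (-R) R ×ˢ Icc (0:ℝ) T))
    (hpde : ∀ x ∈ Ioo (-R) R, ∀ t ∈ Ioo (0:ℝ) T,
      HasDerivAt (fun x' => B x' t * Bx x' t) (Bt x t) x)
    (hB0 : ∀ t ∈ Icc (0:ℝ) T, B (-R) t = 0)
    (η : ℝ → ℝ)
    (hηmem : ∀ t ∈ Icc (0:ℝ) T, η t ∈ Ioo (-R) R)
    (hηcont : ContinuousOn η (Icc (0:ℝ) T))
    (hη' : ∀ t ∈ Ioo (0:ℝ) T, HasDerivAt η (-(Bx (η t) t)) t) :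
    ∀ t ∈ Icc (0:ℝ) T, (∫ x in (-R)..(η t), B x t) = ∫ x in (-R)..(η 0), B x 0 := by
  exact mass_conservation_general (F := fun x t => B x t * Bx x t)
    (fun x hx t ht => hBt x (Ioo_subset_Icc_self hx) t (Ioo_subset_Icc_self ht)) hBcont
    (hBtcont.mono (prod_mono_right Ioo_subset_Icc_self))
    (fun t ht => (hBcont.mul hBxcont).uncurry_right (f := fun x t => B x t * Bx x t) t
      (Ioo_subset_Icc_self ht)) hpde hηmem hηcont hη'
    fun t ht => by simp [hB0 t (Ioo_subset_Icc_self ht), mul_comm]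
end
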